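/- If u ∈ L²(0,1), then Tu ∈ L²((0,1) × (−1/2, 1/2)) and ∫₀¹ |u(x)|² dx = ∫∫_{(0,1)×(−1/2,1/2)} |(Tu)(x,y)|² dx dy, i.e. the two-scale transform is an L²-isometry: ‖u‖²_{L²(0,1)} = ‖Tu‖²_{L²((0,1)×(−1/2,1/2))}. (Norm Rule.) -/

import Mathlib

open Set MeasureTheory

/-- Two-scale transform: `(Tu)(x,y) = u(ε(⌊x/ε⌋ + 1/2) + εy)` with `ε = 1/N`. -/
noncomputable def twoScale (N : ℕ) (u : ℝ → ℝ) (x y : ℝ) : ℝ :=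
  u ((1 / (N : ℝ)) * ((⌊x / (1 / (N : ℝ))⌋ : ℝ) + 1 / 2) + (1 / (N : ℝ)) * y)

theorem ts_sum (N : ℕ) (hN : 0 < N) (f : ℝ → ENNReal) :
    ∫⁻ x in Ico (0 : ℝ) 1, f x
      = ∑ k ∈ Finset.range N, ∫⁻ x in Ico ((k : ℝ) / N) (((k : ℝ) + 1) / N), f x := by
  have hN' : (0 : ℝ) < N := by exact_mod_cast hN
  have key : ∀ M : ℕ, ∫⁻ x in Ico (0 : ℝ) ((M : ℝ) / N), f x
      = ∑ k ∈ Finset.range M, ∫⁻ x in Ico ((k : ℝ) / N) (((k : ℝ) + 1) / N), f x := by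
    intro M
    induction M with
    | zero => simp
    | succ M ih =>
      rw [Finset.sum_range_succ, ← ih, ← lintegral_union measurableSet_Ico
        (Ico_disjoint_Ico_same), Ico_union_Ico_eq_Ico (by positivity) (by gcongr; linarith)]
      push_cast
      rfl
  rw [← key N, div_self hN'.ne']

theorem ts_cell (N : ℕ) (hN : 0 < N) (f : ℝ → ENNReal) (k : ℝ) :
    ∫⁻ x in Ico (k / N) ((k + 1) / N), f x
      = ENNReal.ofReal (1 / N) * ∫⁻ y in Ico (-(1 / 2) : ℝ) (1 / 2),
        f ((1 / (N : ℝ)) * (k + 1 / 2) + (1 / (N : ℝ)) * y) := by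
  have hN' : (0 : ℝ) < N := by exact_mod_cast hN
  have himg : (fun y : ℝ => (1 / (N : ℝ)) * (k + 1 / 2) + (1 / (N : ℝ)) * y) ''
      Ico (-(1 / 2) : ℝ) (1 / 2) = Ico (k / N) ((k + 1) / N) := by
    ext z
    simp only [mem_image, mem_Ico]
    constructor
    · rintro ⟨y, ⟨h1, h2⟩, rfl⟩
      rw [div_le_iff₀ hN', lt_div_iff₀ hN']
      have : (1 / (N : ℝ) * (k + 1 / 2) + 1 / N * y) * N = k + 1 / 2 + y := by
        field_simp
      rw [this]
      constructor <;> linarith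
    · rintro ⟨h1, h2⟩
      rw [div_le_iff₀ hN'] at h1
      rw [lt_div_iff₀ hN'] at h2
      refine ⟨z * N - k - 1 / 2, ⟨by linarith, by linarith⟩, ?_⟩
      field_simp
      ring
  rw [← himg, lintegral_image_eq_lintegral_abs_deriv_mul (f' := fun _ => 1 / (N : ℝ))
    measurableSet_Ico]
  · rw [lintegral_const_mul', abs_of_pos (by positivity)]
    exact ENNReal.ofReal_ne_top
  · intro x _
    have := ((hasDerivAt_id x).const_mul (1 / (N : ℝ))).const_add ((1 / (N : ℝ)) * (k + 1 / 2))
    simpa using this.hasDerivWithinAt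
  · intro a _ b _ h
    have h' : 1 / (N : ℝ) * a = 1 / (N : ℝ) * b := add_left_cancel h
    exact mul_left_cancel₀ (by positivity) h'

theorem ts_mp (N : ℕ) (hN : 0 < N) :
    MeasurePreserving (fun p : ℝ × ℝ =>
      (1 / (N : ℝ)) * ((⌊p.1 / (1 / (N : ℝ))⌋ : ℝ) + 1 / 2) + (1 / (N : ℝ)) * p.2)
      (volume.restrict (Ioo (0 : ℝ) 1 ×ˢ Ioo (-(1 / 2) : ℝ) (1 / 2)))
      (volume.restrict (Ioo (0 : ℝ) 1)) := by
  have hN' : (0 : ℝ) < N := by exact_mod_cast hN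
  have hm : Measurable (fun p : ℝ × ℝ =>
      (1 / (N : ℝ)) * ((⌊p.1 / (1 / (N : ℝ))⌋ : ℝ) + 1 / 2) + (1 / (N : ℝ)) * p.2) := by
    have : Measurable (fun p : ℝ × ℝ => (⌊p.1 / (1 / (N : ℝ))⌋ : ℝ)) :=
      (measurable_from_top (f := fun z : ℤ => (z : ℝ))).comp
        (Int.measurable_floor.comp (measurable_fst.div_const _))
    fun_prop
  refine ⟨hm, ?_⟩
  rw [Measure.volume_eq_prod, ← Measure.prod_restrict,
    Measure.restrict_congr_set (Ioo_ae_eq_Ico (μ := volume) (a := (0 : ℝ)) (b := 1)),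
    Measure.restrict_congr_set (Ioo_ae_eq_Ico (μ := volume) (a := (-(1 / 2) : ℝ)) (b := 1 / 2))]
  refine Measure.ext_of_lintegral _ fun f hf => ?_
  rw [lintegral_map hf hm, lintegral_prod _ (by exact (hf.comp hm).aemeasurable), ts_sum N hN, ts_sum N hN]
  refine Finset.sum_congr rfl fun k _ => ?_
  rw [ts_cell N hN f k]
  have : ∀ x ∈ Ico ((k : ℝ) / N) (((k : ℝ) + 1) / N), (⌊x / (1 / (N : ℝ))⌋ : ℝ) = k := by
    rintro x ⟨h1, h2⟩
    rw [div_le_iff₀ hN'] at h1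
    rw [lt_div_iff₀ hN'] at h2
    have : ⌊x / (1 / (N : ℝ))⌋ = (k : ℤ) := by
      rw [Int.floor_eq_iff]
      simp only [div_div_eq_mul_div, div_one, Int.cast_natCast]
      exact ⟨h1, h2⟩
    rw [this]
    simp
  rw [setLIntegral_congr_fun (g := fun _ => ∫⁻ y in Ico (-(1 / 2) : ℝ) (1 / 2),
        f ((1 / (N : ℝ)) * ((k : ℝ) + 1 / 2) + (1 / (N : ℝ)) * y)) measurableSet_Ico
        (fun x hx => by simp only [this x hx])]
  rw [setLIntegral_const, Real.volume_Ico, mul_comm]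
  congr 2
  ring

/-- **Norm Rule.** If `u ∈ L²(0,1)`, then `Tu ∈ L²((0,1) × (-1/2,1/2))` and
`∫ |u|² = ∫∫ |Tu|²`: the two-scale transform is an `L²`-isometry. -/
theorem two_scale_norm_rule (N : ℕ) (hN : 0 < N) (u : ℝ → ℝ)
    (hu : MemLp u 2 (volume.restrict (Ioo (0 : ℝ) 1))) :
    MemLp (fun p : ℝ × ℝ => twoScale N u p.1 p.2) 2
        (volume.restrict (Ioo (0 : ℝ) 1 ×ˢ Ioo (-(1 / 2) : ℝ) (1 / 2))) ∧
    ∫ x in Ioo (0 : ℝ) 1, |u x| ^ 2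
      = ∫ p in Ioo (0 : ℝ) 1 ×ˢ Ioo (-(1 / 2) : ℝ) (1 / 2),
          |twoScale N u p.1 p.2| ^ 2 := by
  have mp := ts_mp N hN
  refine ⟨hu.comp_measurePreserving mp, ?_⟩
  have h : AEStronglyMeasurable (fun x => |u x| ^ 2) (volume.restrict (Ioo (0 : ℝ) 1)) := by
    have := hu.1.norm.pow 2
    exact this
  rw [← mp.map_eq] at h ⊢
  exact integral_map mp.measurable.aemeasurable h
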